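/- arXiv:0802.1491 — 6 statements merged into one kernel-verified Lean document; each statement's English description precedes it below -/
import Mathlib

section
/- Every 4×4 complex matrix F has a unique presentation F = u • 1 + v • H + Σ_k u_k • γ^k + Σ_k v_k • (H * γ^k) + Σ_{p,q} w p q • (γ^p * γ^q), where u, v are complex numbers, u_k and v_k (k = 0,…,3) are complex numbers, and w : Fin 4 → Fin 4 → ℂ is skew-symmetric (w p q = -w q p); i.e. the coefficients (u, v, (u_k), (v_k), w) exist and are uniquely determined by F. -/
open Matrix

noncomputable section

/-- The Dirac γ-matrices (upper index) in the chiral representation. -/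
def γup : Fin 4 → Matrix (Fin 4) (Fin 4) ℂ :=
  ![!![0,0,1,0; 0,0,0,1; 1,0,0,0; 0,1,0,0],
    !![0,0,0,-1; 0,0,-1,0; 0,1,0,0; 1,0,0,0],
    !![0,0,0,Complex.I; 0,0,-Complex.I,0; 0,-Complex.I,0,0; Complex.I,0,0,0],
    !![0,0,-1,0; 0,0,0,1; 1,0,0,0; 0,-1,0,0]]

/-- The lowered-index Dirac γ-matrices: γ₀ = γ⁰, γⱼ = -γʲ for j = 1,2,3. -/
def γdn : Fin 4 → Matrix (Fin 4) (Fin 4) ℂ :=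
  ![γup 0, -γup 1, -γup 2, -γup 3]

/-- The chirality operator H = diag(1,1,-1,-1). -/
def Hc : Matrix (Fin 4) (Fin 4) ℂ :=
  !![1,0,0,0; 0,1,0,0; 0,0,-1,0; 0,0,0,-1]

/-- Components of the Minkowski metric of signature (+,-,-,-). -/
def η (p q : Fin 4) : ℂ := if p = q then (if p = 0 then 1 else -1) else 0

/-- The Kronecker delta. -/
def δ (p q : Fin 4) : ℂ := if p = q then 1 else 0

/-- The Levi-Civita symbol: the sign of the permutation (p,q,r,s) of (0,1,2,3),
and 0 if any two indices coincide. -/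
def ε (p q r s : Fin 4) : ℂ :=
  ((∏ i : Fin 4, ∏ j : Fin 4,
      if i < j then Int.sign ((![p,q,r,s] j : ℤ) - (![p,q,r,s] i : ℤ)) else 1 : ℤ) : ℂ)

/-- The spinor metric matrix. -/
def dm : Matrix (Fin 4) (Fin 4) ℂ := !![0,1,0,0; -1,0,0,0; 0,0,0,-1; 0,0,1,0]

/-- The Dirac form matrix. -/
def Dm : Matrix (Fin 4) (Fin 4) ℂ := !![0,0,1,0; 0,0,0,1; 1,0,0,0; 0,1,0,0]

end

/-- The expansion F = u·1 + v·H + Σ_k u_k γ^k + Σ_k v_k H γ^k + Σ_{p,q} w_{pq} γ^p γ^q. -/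
noncomputable def diracExpand (u v : ℂ) (uv vv : Fin 4 → ℂ) (w : Fin 4 → Fin 4 → ℂ) :
    Matrix (Fin 4) (Fin 4) ℂ :=
  u • (1 : Matrix (Fin 4) (Fin 4) ℂ) + v • Hc + (∑ k : Fin 4, uv k • γup k)
    + (∑ k : Fin 4, vv k • (Hc * γup k))
    + ∑ p : Fin 4, ∑ q : Fin 4, w p q • (γup p * γup q)

/-- The skew array with the given entries 01, 02, 03, 12, 13, 23. -/
noncomputable def dW (a b c d e f : ℂ) : Fin 4 → Fin 4 → ℂ :=
  ![![0, a, b, c], ![-a, 0, d, e], ![-b, -d, 0, f], ![-c, -e, -f, 0]]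

lemma dW_skew (a b c d e f : ℂ) (p q : Fin 4) : dW a b c d e f p q = -dW a b c d e f q p := by
  fin_cases p <;> fin_cases q <;> simp [dW]

set_option maxHeartbeats 4000000 in
/-- Explicit entries of the expansion with skew coefficients. -/
lemma diracExpand_skew (u v : ℂ) (a b : Fin 4 → ℂ) (w : Fin 4 → Fin 4 → ℂ)
    (h : ∀ p q, w p q = -w q p) :
    diracExpand u v a b w =
    !![u+v+2*w 0 3-2*Complex.I*w 1 2, 2*w 0 1-2*Complex.I*w 0 2-2*Complex.I*w 2 3+2*w 1 3,
        a 0+b 0-(a 3+b 3), -(a 1+b 1)+Complex.I*(a 2+b 2);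
      2*w 0 1+2*Complex.I*w 0 2-2*Complex.I*w 2 3-2*w 1 3, u+v-2*w 0 3+2*Complex.I*w 1 2,
        -(a 1+b 1)-Complex.I*(a 2+b 2), a 0+b 0+(a 3+b 3);
      a 0-b 0+(a 3-b 3), (a 1-b 1)-Complex.I*(a 2-b 2),
        u-v-2*w 0 3-2*Complex.I*w 1 2, -2*w 0 1+2*Complex.I*w 0 2-2*Complex.I*w 2 3+2*w 1 3;
      (a 1-b 1)+Complex.I*(a 2-b 2), a 0-b 0-(a 3-b 3),
        -2*w 0 1-2*Complex.I*w 0 2-2*Complex.I*w 2 3-2*w 1 3, u-v+2*w 0 3+2*Complex.I*w 1 2] := by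
  have hd : ∀ p, w p p = 0 := fun p => by linear_combination (h p p) / 2
  have h10 := h 1 0
  have h20 := h 2 0
  have h30 := h 3 0
  have h21 := h 2 1
  have h31 := h 3 1
  have h32 := h 3 2
  ext i j
  fin_cases i <;> fin_cases j <;>
    simp [diracExpand, γup, Hc, Fin.sum_univ_four, Matrix.mul_apply, hd, h10, h20, h30, h21, h31,
      h32, Matrix.add_apply, Matrix.one_apply] <;> (try ring_nf) <;> (try simp only [Complex.I_sq]) <;> (try ring)

/-- Every 4×4 complex matrix has a unique presentation
F = u·1 + v·H + Σ_k u_k γ^k + Σ_k v_k H γ^k + Σ_{p,q} w_{pq} γ^p γ^q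
with w skew-symmetric. -/
theorem dirac_expansion_exists_unique (F : Matrix (Fin 4) (Fin 4) ℂ) :
    ∃ (u v : ℂ) (uv vv : Fin 4 → ℂ) (w : Fin 4 → Fin 4 → ℂ),
      (∀ p q, w p q = -w q p) ∧ F = diracExpand u v uv vv w ∧
      ∀ (u' v' : ℂ) (uv' vv' : Fin 4 → ℂ) (w' : Fin 4 → Fin 4 → ℂ),
        (∀ p q, w' p q = -w' q p) → F = diracExpand u' v' uv' vv' w' →
        u' = u ∧ v' = v ∧ uv' = uv ∧ vv' = vv ∧ w' = w := by
  refine ⟨(F 0 0 + F 1 1 + F 2 2 + F 3 3) / 4, (F 0 0 + F 1 1 - F 2 2 - F 3 3) / 4,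
    ![(F 0 2 + F 1 3 + F 2 0 + F 3 1) / 4, (F 2 1 + F 3 0 - F 0 3 - F 1 2) / 4,
      Complex.I * (F 2 1 - F 3 0 - F 0 3 + F 1 2) / 4, (F 2 0 - F 3 1 - F 0 2 + F 1 3) / 4],
    ![(F 0 2 + F 1 3 - F 2 0 - F 3 1) / 4, -(F 2 1 + F 3 0 + F 0 3 + F 1 2) / 4,
      -Complex.I * (F 2 1 - F 3 0 + F 0 3 - F 1 2) / 4, -(F 2 0 - F 3 1 + F 0 2 - F 1 3) / 4],
    dW ((F 0 1 + F 1 0 - F 2 3 - F 3 2) / 8) (Complex.I * (F 0 1 - F 1 0 - F 2 3 + F 3 2) / 8)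
      ((F 0 0 - F 1 1 - F 2 2 + F 3 3) / 8) (Complex.I * (F 0 0 - F 1 1 + F 2 2 - F 3 3) / 8)
      ((F 0 1 - F 1 0 + F 2 3 - F 3 2) / 8) (Complex.I * (F 0 1 + F 1 0 + F 2 3 + F 3 2) / 8),
    dW_skew _ _ _ _ _ _, ?_, ?_⟩
  · rw [diracExpand_skew _ _ _ _ _ (dW_skew _ _ _ _ _ _)]
    ext i j
    fin_cases i <;> fin_cases j <;> simp [dW] <;> (try ring_nf) <;> (try simp only [Complex.I_sq]) <;> (try ring)
  · intro u v a b w h hF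
    rw [diracExpand_skew _ _ _ _ _ h] at hF
    subst hF
    have hd : ∀ p, w p p = 0 := fun p => by linear_combination (h p p) / 2
    have h10 := h 1 0
    have h20 := h 2 0
    have h30 := h 3 0
    have h21 := h 2 1
    have h31 := h 3 1
    have h32 := h 3 2
    refine ⟨?_, ?_, ?_, ?_, ?_⟩
    · simp; ring
    · simp; ring
    · ext k
      fin_cases k <;> simp <;> (try ring_nf) <;> (try simp only [Complex.I_sq]) <;> (try ring)
    · ext k
      fin_cases k <;> simp <;> (try ring_nf) <;> (try simp only [Complex.I_sq]) <;> (try ring)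
    · ext p q
      fin_cases p <;> fin_cases q <;> simp [dW, hd, h10, h20, h30, h21, h31, h32] <;> (try ring_nf) <;> (try simp only [Complex.I_sq]) <;> (try ring)
end

section
/- Let F = u • 1 + v • H + Σ_k u_k • γ^k + Σ_k v_k • (H * γ^k) + Σ_{p,q} w p q • (γ^p * γ^q) with w skew-symmetric (w p q = -w q p). Then F is d-symmetric (Fᵀ * d = d * F) if and only if u_k = 0 for all k in {0,1,2,3} and w p q = 0 for all p, q in {0,1,2,3}. -/
open Matrix

set_option maxHeartbeats 4000000 in
theorem diracExpand_explicit (u v : ℂ) (uv vv : Fin 4 → ℂ) (w : Fin 4 → Fin 4 → ℂ)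
    (hw : ∀ p q, w p q = -w q p) : diracExpand u v uv vv w =
    !![u + v + 2 * (w 0 3 - Complex.I * w 1 2),
       2 * (w 0 1 - Complex.I * w 2 3) - 2 * Complex.I * (w 0 2 + Complex.I * w 1 3),
       (uv 0 + vv 0) - (uv 3 + vv 3), -(uv 1 + vv 1) + Complex.I * (uv 2 + vv 2);
       2 * (w 0 1 - Complex.I * w 2 3) + 2 * Complex.I * (w 0 2 + Complex.I * w 1 3),
       u + v - 2 * (w 0 3 - Complex.I * w 1 2),
       -(uv 1 + vv 1) - Complex.I * (uv 2 + vv 2), (uv 0 + vv 0) + (uv 3 + vv 3);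
       (uv 0 - vv 0) + (uv 3 - vv 3), (uv 1 - vv 1) - Complex.I * (uv 2 - vv 2),
       u - v + 2 * (-w 0 3 - Complex.I * w 1 2),
       2 * (-w 0 1 - Complex.I * w 2 3) - 2 * Complex.I * (-w 0 2 + Complex.I * w 1 3);
       (uv 1 - vv 1) + Complex.I * (uv 2 - vv 2), (uv 0 - vv 0) - (uv 3 - vv 3),
       2 * (-w 0 1 - Complex.I * w 2 3) + 2 * Complex.I * (-w 0 2 + Complex.I * w 1 3),
       u - v - 2 * (-w 0 3 - Complex.I * w 1 2)] := by
  have hd : ∀ p, w p p = 0 := fun p => self_eq_neg.mp (hw p p)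
  have h10 := hw 1 0
  have h20 := hw 2 0
  have h30 := hw 3 0
  have h21 := hw 2 1
  have h31 := hw 3 1
  have h32 := hw 3 2
  have hI : Complex.I * Complex.I = -1 := Complex.I_mul_I
  simp only [diracExpand, Fin.sum_univ_four, hd, h10, h20, h30, h21, h31, h32, zero_smul]
  ext i j
  fin_cases i <;> fin_cases j <;>
    simp [γup, Hc, Matrix.one_apply] <;>
    grind

/-- A spin-operator is symmetric w.r.t. the spinor metric d iff the coefficients
u_k and w_{pq} of its expansion vanish. -/
theorem dirac_expansion_d_symmetric
    (u v : ℂ) (uv vv : Fin 4 → ℂ) (w : Fin 4 → Fin 4 → ℂ)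
    (hw : ∀ p q, w p q = -w q p)
    (F : Matrix (Fin 4) (Fin 4) ℂ) (hF : F = diracExpand u v uv vv w) :
    Fᵀ * dm = dm * F ↔ ((∀ k : Fin 4, uv k = 0) ∧ ∀ p q : Fin 4, w p q = 0) := by
  subst hF
  have hd : ∀ p, w p p = 0 := fun p => self_eq_neg.mp (hw p p)
  have h10 := hw 1 0
  have h20 := hw 2 0
  have h30 := hw 3 0
  have h21 := hw 2 1
  have h31 := hw 3 1
  have h32 := hw 3 2
  have hI : Complex.I * Complex.I = -1 := Complex.I_mul_I
  rw [diracExpand_explicit u v uv vv w hw]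
  constructor
  · intro h
    have e := fun i j => congrFun (congrFun h i) j
    have e00 := e 0 0
    have e02 := e 0 2
    have e03 := e 0 3
    have e11 := e 1 1
    have e12 := e 1 2
    have e13 := e 1 3
    have e01 := e 0 1
    have e22 := e 2 2
    have e23 := e 2 3
    have e33 := e 3 3
    clear e h
    simp [dm, Matrix.mul_apply, Fin.sum_univ_four] at e00 e02 e03 e11 e12 e13 e01 e22 e23 e33
    have u0 : uv 0 = 0 := by grind
    have u1 : uv 1 = 0 := by grind
    have u2 : uv 2 = 0 := by grind
    have u3 : uv 3 = 0 := by grind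
    have w01 : w 0 1 = 0 := by grind
    have w02 : w 0 2 = 0 := by grind
    have w03 : w 0 3 = 0 := by grind
    have w12 : w 1 2 = 0 := by grind
    have w13 : w 1 3 = 0 := by grind
    have w23 : w 2 3 = 0 := by grind
    refine ⟨fun k => ?_, fun p q => ?_⟩
    · fin_cases k <;> assumption
    · fin_cases p <;> fin_cases q <;>
        simp [hd, h10, h20, h30, h21, h31, h32, w01, w02, w03, w12, w13, w23]
  · rintro ⟨h1, h2⟩
    ext i j
    fin_cases i <;> fin_cases j <;>
      simp [dm, Matrix.mul_apply, Fin.sum_univ_four, h1, h2] <;> ring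
end

section
/- Let F = u • 1 + v • H + Σ_k u_k • γ^k + Σ_k v_k • (H * γ^k) + Σ_{p,q} w p q • (γ^p * γ^q) with w skew-symmetric (w p q = -w q p). Then F is d-skew-symmetric (Fᵀ * d = -(d * F)) if and only if u = 0, v = 0, and v_k = 0 for all k in {0,1,2,3}. -/
open Matrix

theorem aux_g (k : Fin 4) : (γup k)ᵀ * dm = -(dm * γup k) := by
  fin_cases k <;> ext i j <;> fin_cases i <;> fin_cases j <;>
    simp [γup, dm, Matrix.mul_apply, Fin.sum_univ_four]

theorem aux_H : Hcᵀ * dm = dm * Hc := by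
  ext i j
  fin_cases i <;> fin_cases j <;>
    simp [Hc, dm, Matrix.mul_apply, Fin.sum_univ_four]

theorem aux_gH (k : Fin 4) : γup k * Hc = -(Hc * γup k) := by
  fin_cases k <;> ext i j <;> fin_cases i <;> fin_cases j <;>
    simp [γup, Hc, Matrix.mul_apply, Fin.sum_univ_four]

theorem aux_Hg (k : Fin 4) : (Hc * γup k)ᵀ * dm = dm * (Hc * γup k) := by
  rw [Matrix.transpose_mul, Matrix.mul_assoc, aux_H, ← Matrix.mul_assoc, aux_g,
    Matrix.neg_mul, Matrix.mul_assoc, aux_gH, Matrix.mul_neg, neg_neg]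

theorem aux_gg (p q : Fin 4) : (γup p * γup q)ᵀ * dm = dm * (γup q * γup p) := by
  rw [Matrix.transpose_mul, Matrix.mul_assoc, aux_g, Matrix.mul_neg, ← Matrix.mul_assoc, aux_g,
    Matrix.neg_mul, neg_neg, Matrix.mul_assoc]

theorem aux_w (w : Fin 4 → Fin 4 → ℂ) (hw : ∀ p q, w p q = -w q p) :
    (∑ p : Fin 4, ∑ q : Fin 4, w p q • (γup p * γup q))ᵀ * dm
      = -(dm * ∑ p : Fin 4, ∑ q : Fin 4, w p q • (γup p * γup q)) := by
  simp only [Matrix.transpose_sum, Matrix.transpose_smul, Matrix.sum_mul, Matrix.mul_sum,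
    Matrix.smul_mul, Matrix.mul_smul, aux_gg]
  rw [Finset.sum_comm, ← Finset.sum_neg_distrib]
  refine Finset.sum_congr rfl fun p _ => ?_
  rw [← Finset.sum_neg_distrib]
  refine Finset.sum_congr rfl fun q _ => ?_
  rw [hw q p, neg_smul]

theorem aux_key (u v : ℂ) (uv vv : Fin 4 → ℂ) (w : Fin 4 → Fin 4 → ℂ)
    (hw : ∀ p q, w p q = -w q p) :
    (diracExpand u v uv vv w)ᵀ * dm + dm * diracExpand u v uv vv w
      = (2 : ℂ) • (dm * (u • (1 : Matrix (Fin 4) (Fin 4) ℂ) + v • Hc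
          + ∑ k : Fin 4, vv k • (Hc * γup k))) := by
  have h1 : (∑ k : Fin 4, uv k • γup k)ᵀ * dm = -(dm * ∑ k : Fin 4, uv k • γup k) := by
    simp only [Matrix.transpose_sum, Matrix.transpose_smul, Matrix.sum_mul, Matrix.mul_sum,
      Matrix.smul_mul, Matrix.mul_smul, aux_g, smul_neg, Finset.sum_neg_distrib]
  have h2 : (∑ k : Fin 4, vv k • (Hc * γup k))ᵀ * dm
      = dm * ∑ k : Fin 4, vv k • (Hc * γup k) := by
    simp only [Matrix.transpose_sum, Matrix.transpose_smul, Matrix.sum_mul, Matrix.mul_sum,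
      Matrix.smul_mul, Matrix.mul_smul, aux_Hg]
  have h3 := aux_w w hw
  unfold diracExpand
  rw [Matrix.transpose_add, Matrix.transpose_add, Matrix.transpose_add, Matrix.transpose_add]
  simp only [Matrix.add_mul, Matrix.mul_add, h1, h2, h3]
  simp only [Matrix.transpose_smul, Matrix.smul_mul, Matrix.mul_smul, aux_H,
    Matrix.transpose_one, Matrix.one_mul, Matrix.mul_one]
  module

/-- A spin-operator is skew-symmetric w.r.t. the spinor metric d iff the coefficients
u, v and v_k of its expansion vanish. -/
theorem dirac_expansion_d_skew_symmetric
    (u v : ℂ) (uv vv : Fin 4 → ℂ) (w : Fin 4 → Fin 4 → ℂ)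
    (hw : ∀ p q, w p q = -w q p)
    (F : Matrix (Fin 4) (Fin 4) ℂ) (hF : F = diracExpand u v uv vv w) :
    Fᵀ * dm = -(dm * F) ↔ (u = 0 ∧ v = 0 ∧ ∀ k : Fin 4, vv k = 0) := by
  subst hF
  rw [eq_neg_iff_add_eq_zero, aux_key u v uv vv w hw]
  constructor
  · intro h
    have e := fun i j => congrFun (congrFun h i) j
    have e01 := e 0 1
    have e23 := e 2 3
    have a := e 0 2
    have b := e 0 3
    have c := e 1 2
    have d := e 1 3
    simp [Matrix.mul_apply, Fin.sum_univ_four, dm, Hc, γup] at e01 e23 a b c d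
    simp [Matrix.vecMul, dotProduct, Fin.sum_univ_four, Matrix.one_apply] at e01 e23 a b c d
    have hI := Complex.I_ne_zero
    have hu : u = 0 := by linear_combination (e01 - e23) / 2
    have hv : v = 0 := by linear_combination (e01 + e23) / 2
    have h0 : vv 0 = 0 := by linear_combination (b - c) / 2
    have h3 : vv 3 = 0 := by linear_combination (b + c) / 2
    have h1 : vv 1 = 0 := by linear_combination (d - a) / 2
    have h2 : vv 2 = 0 := by
      have : Complex.I * vv 2 = 0 := by linear_combination -(a + d) / 2
      simpa using this
    refine ⟨hu, hv, fun k => ?_⟩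
    fin_cases k <;> assumption
  · rintro ⟨rfl, rfl, h⟩
    simp [h]
end

section
/- Let F = u • 1 + v • H + Σ_k u_k • γ^k + Σ_k v_k • (H * γ^k) + Σ_{p,q} w p q • (γ^p * γ^q) with w skew-symmetric (w p q = -w q p). Then F is D-Hermitian (Fᴴ * D = D * F) if and only if u = conj(u), v = -conj(v), u_k = conj(u_k) and v_k = conj(v_k) for all k, and w p q = -conj(w p q) for all p, q (i.e. u, u_k, v_k are real and v, w p q are purely imaginary). -/
open Matrix

/-- A spin-operator is Hermitian w.r.t. the Dirac form D iff in its expansion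
u, u_k, v_k are real and v, w_{pq} are purely imaginary. -/
theorem dirac_expansion_D_hermitian
    (u v : ℂ) (uv vv : Fin 4 → ℂ) (w : Fin 4 → Fin 4 → ℂ)
    (hw : ∀ p q, w p q = -w q p)
    (F : Matrix (Fin 4) (Fin 4) ℂ) (hF : F = diracExpand u v uv vv w) :
    Fᴴ * Dm = Dm * F ↔
      (u = starRingEnd ℂ u ∧ v = -starRingEnd ℂ v ∧
       (∀ k : Fin 4, uv k = starRingEnd ℂ (uv k)) ∧
       (∀ k : Fin 4, vv k = starRingEnd ℂ (vv k)) ∧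
       ∀ p q : Fin 4, w p q = -starRingEnd ℂ (w p q)) := by
  subst hF
  have e00 : w 0 0 = 0 := self_eq_neg.mp (hw 0 0)
  have e11 : w 1 1 = 0 := self_eq_neg.mp (hw 1 1)
  have e22 : w 2 2 = 0 := self_eq_neg.mp (hw 2 2)
  have e33 : w 3 3 = 0 := self_eq_neg.mp (hw 3 3)
  have e10 := hw 1 0
  have e20 := hw 2 0
  have e30 := hw 3 0
  have e21 := hw 2 1
  have e31 := hw 3 1
  have e32 := hw 3 2
  clear hw
  rw [← Matrix.ext_iff]
  simp only [Fin.forall_fin_succ, diracExpand, Fin.sum_univ_four, e00, e11, e22, e33,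
    e10, e20, e30, e21, e31, e32, γup, Hc, Dm]
  simp [Matrix.mul_apply, Fin.sum_univ_four, Complex.ext_iff, e00, e11, e22, e33,
    e10, e20, e30, e21, e31, e32]
  clear e00 e11 e22 e33 e10 e20 e30 e21 e31 e32
  constructor
  · intro h
    casesm* _ ∧ _
    repeat' apply And.intro
    all_goals linarith
  · intro h
    casesm* _ ∧ _
    repeat' apply And.intro
    all_goals linarith
end

section
/- Let F = u • 1 + v • H + Σ_k u_k • γ^k + Σ_k v_k • (H * γ^k) + Σ_{p,q} w p q • (γ^p * γ^q) with w skew-symmetric (w p q = -w q p). Then F is D-anti-Hermitian (Fᴴ * D = -(D * F)) if and only if u = -conj(u), v = conj(v), u_k = -conj(u_k) and v_k = -conj(v_k) for all k, and w p q = conj(w p q) for all p, q (i.e. u, u_k, v_k are purely imaginary and v, w p q are real). -/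
open Matrix

set_option maxHeartbeats 4000000 in
theorem dirac_expand_eq (u v : ℂ) (a b : Fin 4 → ℂ) (w : Fin 4 → Fin 4 → ℂ)
    (hw : ∀ p q, w p q = -w q p) :
    diracExpand u v a b w =
    !![u + v + 2 * w 0 3 - 2 * Complex.I * w 1 2, 2 * w 0 1 - 2 * Complex.I * w 0 2 + 2 * w 1 3 - 2 * Complex.I * w 2 3, a 0 - a 3 + b 0 - b 3, -a 1 + Complex.I * a 2 - b 1 + Complex.I * b 2;
       2 * w 0 1 + 2 * Complex.I * w 0 2 - 2 * w 1 3 - 2 * Complex.I * w 2 3, u + v - 2 * w 0 3 + 2 * Complex.I * w 1 2, -a 1 - Complex.I * a 2 - b 1 - Complex.I * b 2, a 0 + a 3 + b 0 + b 3;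
       a 0 + a 3 - b 0 - b 3, a 1 - Complex.I * a 2 - b 1 + Complex.I * b 2, u - v - 2 * w 0 3 - 2 * Complex.I * w 1 2, -2 * w 0 1 + 2 * Complex.I * w 0 2 + 2 * w 1 3 - 2 * Complex.I * w 2 3;
       a 1 + Complex.I * a 2 - b 1 - Complex.I * b 2, a 0 - a 3 - b 0 + b 3, -2 * w 0 1 - 2 * Complex.I * w 0 2 - 2 * w 1 3 - 2 * Complex.I * w 2 3, u - v + 2 * w 0 3 + 2 * Complex.I * w 1 2] := by
  have h00 : w 0 0 = 0 := self_eq_neg.mp (hw 0 0)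
  have h11 : w 1 1 = 0 := self_eq_neg.mp (hw 1 1)
  have h22 : w 2 2 = 0 := self_eq_neg.mp (hw 2 2)
  have h33 : w 3 3 = 0 := self_eq_neg.mp (hw 3 3)
  simp only [diracExpand, Fin.sum_univ_four, h00, h11, h22, h33, hw 1 0, hw 2 0, hw 3 0,
    hw 2 1, hw 3 1, hw 3 2]
  ext i j
  fin_cases i <;> fin_cases j <;>
    simp [Hc, γup] <;> ring

theorem D_anti_iff (F : Matrix (Fin 4) (Fin 4) ℂ) :
    Fᴴ * Dm = -(Dm * F) ↔
      ∀ i j, starRingEnd ℂ (F (![2, 3, 0, 1] j) i) = -F (![2, 3, 0, 1] i) j := by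
  rw [← Matrix.ext_iff]
  refine forall_congr' fun i => forall_congr' fun j => ?_
  fin_cases i <;> fin_cases j <;>
    simp [Dm, Matrix.mul_apply, Matrix.vecMul, dotProduct, Fin.sum_univ_four]

set_option maxHeartbeats 4000000 in
/-- A spin-operator is anti-Hermitian w.r.t. the Dirac form D iff in its expansion
u, u_k, v_k are purely imaginary and v, w_{pq} are real. -/
theorem dirac_expansion_D_anti_hermitian
    (u v : ℂ) (uv vv : Fin 4 → ℂ) (w : Fin 4 → Fin 4 → ℂ)
    (hw : ∀ p q, w p q = -w q p)
    (F : Matrix (Fin 4) (Fin 4) ℂ) (hF : F = diracExpand u v uv vv w) :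
    Fᴴ * Dm = -(Dm * F) ↔
      (u = -starRingEnd ℂ u ∧ v = starRingEnd ℂ v ∧
       (∀ k : Fin 4, uv k = -starRingEnd ℂ (uv k)) ∧
       (∀ k : Fin 4, vv k = -starRingEnd ℂ (vv k)) ∧
       ∀ p q : Fin 4, w p q = starRingEnd ℂ (w p q)) := by
  rw [D_anti_iff, hF, dirac_expand_eq _ _ _ _ _ hw]
  have h00 : w 0 0 = 0 := self_eq_neg.mp (hw 0 0)
  have h11 : w 1 1 = 0 := self_eq_neg.mp (hw 1 1)
  have h22 : w 2 2 = 0 := self_eq_neg.mp (hw 2 2)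
  have h33 : w 3 3 = 0 := self_eq_neg.mp (hw 3 3)
  simp only [Fin.forall_fin_succ, IsEmpty.forall_iff, and_true]
  simp [Complex.ext_iff, h00, h11, h22, h33, hw 1 0, hw 2 0, hw 3 0, hw 2 1, hw 3 1, hw 3 2]
  constructor
  · intro h
    casesm* _ ∧ _
    refine ⟨?_, ?_, ⟨?_, ?_, ?_, ?_⟩, ⟨?_, ?_, ?_, ?_⟩, ?_⟩
    all_goals repeat' apply And.intro
    all_goals linarith
  · intro h
    casesm* _ ∧ _
    repeat' apply And.intro
    all_goals linarith
end

section
/- Let V₀, V₁, V₂, V₃ be 4×4 complex matrices. There exists a 4×4 complex matrix F satisfying the commutator equations F * γ_m - γ_m * F = V_m for every m in {0,1,2,3} if and only if there exist a complex number v, complex numbers ṽ_m (m = 0,…,3), complex numbers u_p (p = 0,…,3), and a skew-symmetric array ũ : Fin 4 → Fin 4 → ℂ (ũ m k = -ũ k m) such that for every m: V_m = ṽ_m • H + Σ_k ũ m k • γ^k + Σ_k (2 * v * η m k) • (H * γ^k) + Σ_{p,q} (u_p * η q m - u_q * η p m) • (γ^p * γ^q), where the sums over k, p, q run over {0,1,2,3}.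 -/
open Matrix

/-- General matrix in the Clifford basis. -/
noncomputable def FmAux (a b : ℂ) (c d : Fin 4 → ℂ) (e f : Fin 3 → ℂ) : Matrix (Fin 4) (Fin 4) ℂ :=
  !![a + b + (e 2 - Complex.I * f 2), (e 0 - Complex.I * f 0) - Complex.I * (e 1 - Complex.I * f 1),
      c 0 + d 0 - (c 3 + d 3), -(c 1 + d 1) + Complex.I * (c 2 + d 2);
    (e 0 - Complex.I * f 0) + Complex.I * (e 1 - Complex.I * f 1), a + b - (e 2 - Complex.I * f 2),
      -(c 1 + d 1) - Complex.I * (c 2 + d 2), c 0 + d 0 + (c 3 + d 3);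
    c 0 - d 0 + (c 3 - d 3), (c 1 - d 1) - Complex.I * (c 2 - d 2),
      a - b + (-e 2 - Complex.I * f 2), (-e 0 - Complex.I * f 0) - Complex.I * (-e 1 - Complex.I * f 1);
    (c 1 - d 1) + Complex.I * (c 2 - d 2), c 0 - d 0 - (c 3 - d 3),
      (-e 0 - Complex.I * f 0) + Complex.I * (-e 1 - Complex.I * f 1), a - b - (-e 2 - Complex.I * f 2)]

theorem FmAux_surj (F : Matrix (Fin 4) (Fin 4) ℂ) : ∃ a b c d e f, F = FmAux a b c d e f := by
  have hI : Complex.I * Complex.I = -1 := Complex.I_mul_I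
  refine ⟨(F 0 0 + F 1 1 + F 2 2 + F 3 3) / 4, (F 0 0 + F 1 1 - F 2 2 - F 3 3) / 4,
    ![(F 0 2 + F 1 3 + F 2 0 + F 3 1) / 4, (F 2 1 + F 3 0 - F 0 3 - F 1 2) / 4,
      Complex.I * (F 2 1 - F 3 0 - F 0 3 + F 1 2) / 4, (F 2 0 - F 3 1 - F 0 2 + F 1 3) / 4],
    ![(F 0 2 + F 1 3 - F 2 0 - F 3 1) / 4, (-F 2 1 - F 3 0 - F 0 3 - F 1 2) / 4,
      Complex.I * (-F 2 1 + F 3 0 - F 0 3 + F 1 2) / 4, (-F 2 0 + F 3 1 - F 0 2 + F 1 3) / 4],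
    ![(F 0 1 + F 1 0 - F 2 3 - F 3 2) / 4, Complex.I * (F 0 1 - F 1 0 - F 2 3 + F 3 2) / 4,
      (F 0 0 - F 1 1 - F 2 2 + F 3 3) / 4],
    ![Complex.I * (F 0 1 + F 1 0 + F 2 3 + F 3 2) / 4, -(F 0 1 - F 1 0 + F 2 3 - F 3 2) / 4,
      Complex.I * (F 0 0 - F 1 1 + F 2 2 - F 3 3) / 4], ?_⟩
  ext i j
  fin_cases i <;> fin_cases j <;> simp [FmAux] <;> grind

/-- Skew array. -/
noncomputable def utAux (e f : Fin 3 → ℂ) : Fin 4 → Fin 4 → ℂ :=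
  ![![0, -2 * e 0, -2 * e 1, -2 * e 2], ![2 * e 0, 0, -2 * f 2, 2 * f 1],
    ![2 * e 1, 2 * f 2, 0, -2 * f 0], ![2 * e 2, -2 * f 1, 2 * f 0, 0]]

set_option maxHeartbeats 4000000 in
theorem FmAux_comm (a b : ℂ) (c d : Fin 4 → ℂ) (e f : Fin 3 → ℂ) (m : Fin 4) :
    FmAux a b c d e f * γdn m - γdn m * FmAux a b c d e f =
      (2 * d m) • Hc + (∑ k : Fin 4, utAux e f m k • γup k)
          + (∑ k : Fin 4, (2 * b * η m k) • (Hc * γup k))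
          + ∑ p : Fin 4, ∑ q : Fin 4, (c p * η q m - c q * η p m) • (γup p * γup q) := by
  have hI : Complex.I * Complex.I = -1 := Complex.I_mul_I
  fin_cases m <;>
    simp [FmAux, γdn, γup, Hc, η, utAux, Fin.sum_univ_four] <;>
    refine ⟨⟨?_, ?_, ?_, ?_⟩, ⟨?_, ?_, ?_, ?_⟩, ⟨?_, ?_, ?_, ?_⟩, ?_, ?_, ?_, ?_⟩ <;> grind

/-- Solvability criterion for the commutator equations F γ_m - γ_m F = V_m: the equations
are solvable iff each V_m has an expansion with no identity term, a skew-symmetric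
γ-coefficient array ũ, H γ^k coefficients of the form 2 v g_{mk}, and γ^p γ^q coefficients
of the form u_p g_{qm} - u_q g_{pm}. -/
theorem commutator_equations_solvable_iff (V : Fin 4 → Matrix (Fin 4) (Fin 4) ℂ) :
    (∃ F : Matrix (Fin 4) (Fin 4) ℂ, ∀ m : Fin 4, F * γdn m - γdn m * F = V m) ↔
    ∃ (v : ℂ) (vt : Fin 4 → ℂ) (u : Fin 4 → ℂ) (ut : Fin 4 → Fin 4 → ℂ),
      (∀ m k : Fin 4, ut m k = -ut k m) ∧
      ∀ m : Fin 4,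
        V m = vt m • Hc + (∑ k : Fin 4, ut m k • γup k)
          + (∑ k : Fin 4, (2 * v * η m k) • (Hc * γup k))
          + ∑ p : Fin 4, ∑ q : Fin 4, (u p * η q m - u q * η p m) • (γup p * γup q) := by
  constructor
  · rintro ⟨F, hF⟩
    obtain ⟨a, b, c, d, e, f, rfl⟩ := FmAux_surj F
    refine ⟨b, fun m => 2 * d m, c, utAux e f, ?_, fun m => ?_⟩
    · intro m k
      fin_cases m <;> fin_cases k <;> simp [utAux]
    · rw [← hF m, FmAux_comm]
  · rintro ⟨v, vt, u, ut, hs, hV⟩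
    have hut : ut = utAux ![ut 1 0 / 2, ut 2 0 / 2, ut 3 0 / 2]
        ![ut 3 2 / 2, ut 1 3 / 2, ut 2 1 / 2] := by
      ext m k
      have h := hs m k
      fin_cases m <;> fin_cases k <;> simp [utAux] at h ⊢ <;> grind
    refine ⟨FmAux 0 v u (fun m => vt m / 2) ![ut 1 0 / 2, ut 2 0 / 2, ut 3 0 / 2]
        ![ut 3 2 / 2, ut 1 3 / 2, ut 2 1 / 2], fun m => ?_⟩
    rw [FmAux_comm, ← hut, hV m, mul_div_cancel₀ (vt m) (two_ne_zero)]
end
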